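/- Let S be an almost symmetric numerical semigroup with embedding dimension 4 (i.e., minimally generated by four elements). Then the type of S is at most 3. -/

import Mathlib

/-- The numerical semigroup generated by `n`, viewed inside `ℤ`. -/
def NS {e : ℕ} (n : Fin e → ℕ) : Set ℤ :=
  {x | ∃ a : Fin e → ℕ, x = ∑ j, (a j : ℤ) * n j}

/-- Pseudo-Frobenius numbers of the numerical semigroup generated by `n`. -/
def PF {e : ℕ} (n : Fin e → ℕ) : Set ℤ :=
  {x | x ∉ NS n ∧ ∀ i, x + (n i : ℤ) ∈ NS n}

/-- `F` is the Frobenius number: the maximum of `ℤ \ S`. -/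
def IsFrob {e : ℕ} (n : Fin e → ℕ) (F : ℤ) : Prop :=
  F ∉ NS n ∧ ∀ x : ℤ, F < x → x ∈ NS n

/-- Almost symmetry with respect to the Frobenius number `F`. -/
def AlmostSym {e : ℕ} (n : Fin e → ℕ) (F : ℤ) : Prop :=
  ∀ x : ℤ, x ∉ NS n → F - x ∉ NS n → (x ∈ PF n ∧ F - x ∈ PF n)

/-- `A` is an RF-matrix for `f`. -/
def IsRF {e : ℕ} (n : Fin e → ℕ) (f : ℤ) (A : Matrix (Fin e) (Fin e) ℤ) : Prop :=
  (∀ i, A i i = -1) ∧ (∀ i j, i ≠ j → 0 ≤ A i j) ∧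
    (∀ i, ∑ j, A i j * (n j : ℤ) = f)

/-- `K = λ_{ij} = max {K ∈ ℕ : K·n_j - n_i ∉ S}`. -/
def IsLam {e : ℕ} (n : Fin e → ℕ) (i j : Fin e) (K : ℕ) : Prop :=
  ((K : ℤ) * n j - n i ∉ NS n) ∧
    ∀ L : ℕ, ((L : ℤ) * n j - n i ∉ NS n) → L ≤ K

/-- `n` is a minimal generating system. -/
def MinGen {e : ℕ} (n : Fin e → ℕ) : Prop :=
  ∀ i, ¬ ∃ a : Fin e → ℕ, a i = 0 ∧ (n i : ℤ) = ∑ j, (a j : ℤ) * n j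

/-!
Let `P` be a finite set of pseudo-Frobenius numbers of `S = NS n` stable under `f ↦ F - f`. For
`f ∈ P` and an index `i`, at most one of the following holds for each index `j`:
`f + nᵢ - nⱼ ∈ S`; `f + nᵢ - nⱼ ∈ P`; `(F - f) + nⱼ - nᵢ ∈ S`. Let `u(f, i)` and `v(f, i)` count
the `j` of the first and second kind. The third kind is the first one seen from `(F - f, j)`, so
summing over the `e * |P|` pairs gives `∑ (2 u + v) ≤ e ^ 2 * |P|`.

Conversely `u ≥ 1` and `v ≥ 1`, so `2 u + v ≥ 5` unless `u = 1`. The latter means that `f + nᵢ` is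
a multiple of a single `nⱼ` and has no other expression; for fixed `j` all such pairs share the
value of `f + nᵢ`, so if there are `t` of them then `v ≥ t` on each. Their total shortfall from `5`
is at most `t * (3 - t) ≤ 2`. Hence `5 * e * |P| - 2 * e ≤ e ^ 2 * |P|`, that is
`(5 - e) * |P| ≤ 2`. In the almost symmetric case `P` can be all of `PF n` except `F`.
-/

open Finset

variable {e : ℕ} {n : Fin e → ℕ} {F f g x y : ℤ} {i j k : Fin e} {P : Finset ℤ}

theorem NS_eq_span (n : Fin e → ℕ) :
    NS n = (Submodule.span ℕ (Set.range fun i ↦ (n i : ℤ)) : Set ℤ) := by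
  ext x
  simp only [NS, Set.mem_ofPred_eq, SetLike.mem_coe, Submodule.mem_span_range_iff_exists_fun,
    nsmul_eq_mul, eq_comm]

theorem zero_mem_NS (n : Fin e → ℕ) : (0 : ℤ) ∈ NS n := by
  rw [NS_eq_span]
  exact Submodule.zero_mem _

theorem add_mem_NS (hx : x ∈ NS n) (hy : y ∈ NS n) : x + y ∈ NS n := by
  rw [NS_eq_span] at *
  exact Submodule.add_mem _ hx hy

theorem natCast_mul_mem_NS (n : Fin e → ℕ) (b : ℕ) (j : Fin e) : (b : ℤ) * n j ∈ NS n := by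
  rw [NS_eq_span, ← nsmul_eq_mul]
  exact Submodule.smul_mem _ b (Submodule.subset_span ⟨j, rfl⟩)

theorem nonneg_of_mem_NS (hx : x ∈ NS n) : 0 ≤ x := by
  obtain ⟨a, rfl⟩ := hx
  positivity

theorem sum_sub_mem_NS {a : Fin e → ℕ} (hj : a j ≠ 0) :
    ∑ k, (a k : ℤ) * n k - n j ∈ NS n := by
  have hle : Pi.single j 1 ≤ a := by
    intro k
    rcases eq_or_ne k j with rfl | hk
    · simpa using Nat.one_le_iff_ne_zero.2 hj
    · simp [hk]
  obtain ⟨b, rfl⟩ := exists_add_of_le hle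
  exact ⟨b, by simp [add_mul, sum_add_distrib, Pi.single_apply]⟩

theorem pos_of_mem_PF (hf : f ∈ PF n) (i : Fin e) : 0 < n i := by
  refine Nat.pos_of_ne_zero fun h ↦ hf.1 ?_
  simpa [h] using hf.2 i

theorem add_mem_NS_of_mem_PF (hf : f ∈ PF n) (hx : x ∈ NS n) (hx0 : x ≠ 0) : f + x ∈ NS n := by
  obtain ⟨a, rfl⟩ := hx
  obtain ⟨j, -, hj⟩ := exists_ne_zero_of_sum_ne_zero hx0
  have hsub : ∑ k, (a k : ℤ) * n k - n j ∈ NS n :=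
    sum_sub_mem_NS (by simpa using left_ne_zero_of_mul hj)
  simpa using add_mem_NS (hf.2 j) hsub

namespace IsFrob

theorem neZero (hF : IsFrob n F) : NeZero e := by
  refine ⟨?_⟩
  rintro rfl
  obtain ⟨_, h₁⟩ := hF.2 (F + 1) (by lia)
  obtain ⟨_, h₂⟩ := hF.2 (F + 2) (by lia)
  simp only [univ_eq_empty, sum_empty] at h₁ h₂
  lia

theorem mem_PF (hF : IsFrob n F) (hpos : ∀ i, 0 < n i) : F ∈ PF n :=
  ⟨hF.1, fun i ↦ hF.2 _ (by have := hpos i; lia)⟩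

theorem finite_PF (hF : IsFrob n F) : (PF n).Finite := by
  have := hF.neZero
  refine (Set.finite_Icc (-(n 0 : ℤ)) F).subset fun f hf ↦ ⟨?_, ?_⟩
  · have := nonneg_of_mem_NS (hf.2 0)
    lia
  · exact not_lt.1 fun h ↦ hf.1 (hF.2 f h)

theorem sub_notMem_NS (hF : IsFrob n F) (hf : f ∈ PF n) (hne : f ≠ F) : F - f ∉ NS n := by
  intro h
  have := add_mem_NS_of_mem_PF hf h (sub_ne_zero.2 hne.symm)
  exact hF.1 (by simpa using this)

end IsFrob

open scoped Classical in
/-- The possible positive columns in row `i` of an RF-matrix for `f`: the indices `j` such that the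
generator `n j` occurs in some expression of `f + n i`. -/
noncomputable def rfSupport (n : Fin e → ℕ) (f : ℤ) (i : Fin e) : Finset (Fin e) :=
  {j | f + n i - n j ∈ NS n}

theorem mem_rfSupport : j ∈ rfSupport n f i ↔ f + n i - n j ∈ NS n := by
  simp [rfSupport]

theorem self_notMem_rfSupport (hf : f ∉ NS n) : i ∉ rfSupport n f i := by
  simpa [mem_rfSupport] using hf

theorem mem_rfSupport_of_eq_sum {a : Fin e → ℕ} (ha : f + n i = ∑ k, (a k : ℤ) * n k)
    (hj : a j ≠ 0) : j ∈ rfSupport n f i := by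
  rw [mem_rfSupport, ha]
  exact sum_sub_mem_NS hj

theorem rfSupport_nonempty (hmem : f + n i ∈ NS n) (hne : f + n i ≠ 0) :
    (rfSupport n f i).Nonempty := by
  obtain ⟨a, ha⟩ := hmem
  obtain ⟨j, -, hj⟩ := exists_ne_zero_of_sum_ne_zero (ha ▸ hne)
  exact ⟨j, mem_rfSupport_of_eq_sum ha (by simpa using left_ne_zero_of_mul hj)⟩

theorem exists_eq_mul_of_rfSupport_eq_singleton (hf : f ∈ PF n)
    (hU : rfSupport n f i = {j}) : ∃ b : ℕ, f + n i = b * n j := by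
  obtain ⟨a, ha⟩ := hf.2 i
  refine ⟨a j, ha.trans (sum_eq_single j (fun k _ hk ↦ ?_) (by simp))⟩
  have hak : a k = 0 := by
    by_contra h
    have hmem := mem_rfSupport_of_eq_sum ha h
    rw [hU, mem_singleton] at hmem
    exact hk hmem
  simp [hak]

theorem le_of_rfSupport_eq_singleton {b c : ℕ} (hf : f ∈ PF n) (hU : rfSupport n f i = {j})
    (hV : rfSupport n g k = {j}) (hb : f + n i = b * n j) (hc : g + n k = c * n j) : c ≤ b := by
  by_contra! hlt
  -- `g + n k - n i = (f + n j) + (c - b - 1) * n j`, so `i` would lie in the support of `g`.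
  have hmem : g + n k - n i ∈ NS n := by
    obtain ⟨d, rfl⟩ := Nat.exists_eq_add_of_lt hlt
    convert add_mem_NS (hf.2 j) (natCast_mul_mem_NS n d j) using 1
    push_cast at hc
    linear_combination hc - hb
  have hij : i = j := by rwa [← mem_rfSupport, hV, mem_singleton] at hmem
  exact self_notMem_rfSupport hf.1 (by rw [hU, hij, mem_singleton] : i ∈ rfSupport n f i)

theorem add_eq_add_of_rfSupport_eq_singleton (hf : f ∈ PF n) (hg : g ∈ PF n)
    (hU : rfSupport n f i = {j}) (hV : rfSupport n g k = {j}) : f + n i = g + n k := by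
  obtain ⟨b, hb⟩ := exists_eq_mul_of_rfSupport_eq_singleton hf hU
  obtain ⟨c, hc⟩ := exists_eq_mul_of_rfSupport_eq_singleton hg hV
  have hbc : b = c := (le_of_rfSupport_eq_singleton hg hV hU hc hb).antisymm
    (le_of_rfSupport_eq_singleton hf hU hV hb hc)
  rw [hb, hc, hbc]

/-- The indices `j` such that trading the generator `n i` for `n j` turns `f` into another member
`f + n i - n j` of `P`. The index `i` itself is included when `f ∈ P`. -/
def exchangeSet (n : Fin e → ℕ) (P : Finset ℤ) (f : ℤ) (i : Fin e) : Finset (Fin e) :=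
  {j | f + n i - n j ∈ P}

theorem mem_exchangeSet : j ∈ exchangeSet n P f i ↔ f + n i - n j ∈ P := by
  simp [exchangeSet]

theorem self_mem_exchangeSet (hf : f ∈ P) : i ∈ exchangeSet n P f i := by
  simpa [mem_exchangeSet] using hf

/-- The pairs `(f, i)` with `f ∈ P` for which row `i` of an RF-matrix for `f` is forced to have
column `j` as its only positive column. -/
noncomputable def pureRows (n : Fin e → ℕ) (P : Finset ℤ) (j : Fin e) : Finset (ℤ × Fin e) :=
  {p ∈ P ×ˢ univ | rfSupport n p.1 p.2 = {j}}

theorem mem_pureRows {p : ℤ × Fin e} :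
    p ∈ pureRows n P j ↔ p.1 ∈ P ∧ rfSupport n p.1 p.2 = {j} := by
  simp [pureRows]

/-- The weight of row `i` of `f`: positions of `rfSupport` count twice, since by the reflection
`f ↦ F - f` each of them also rules out a position in a row of `F - f`. -/
noncomputable def rowWeight (n : Fin e → ℕ) (P : Finset ℤ) (f : ℤ) (i : Fin e) : ℕ :=
  2 * #(rfSupport n f i) + #(exchangeSet n P f i)

/-- `P` is a finite set of pseudo-Frobenius numbers stable under the reflection `f ↦ F - f`. -/
structure IsSymmPF (n : Fin e → ℕ) (F : ℤ) (P : Finset ℤ) : Prop where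
  mem_PF : ∀ f ∈ P, f ∈ PF n
  sub_mem : ∀ f ∈ P, F - f ∈ P

theorem mul_three_sub_le_two (t : ℤ) : t * (3 - t) ≤ 2 := by
  rcases le_or_gt t 1 with h | h <;> nlinarith

namespace IsSymmPF

theorem sub_notMem_NS (hP : IsSymmPF n F P) (hf : f ∈ P) : F - f ∉ NS n :=
  (hP.mem_PF _ (hP.sub_mem f hf)).1

theorem add_ne_zero (hP : IsSymmPF n F P) (hF : IsFrob n F) (hf : f ∈ P) (i : Fin e) :
    f + n i ≠ 0 := by
  intro h
  have := pos_of_mem_PF (hP.mem_PF f hf) i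
  exact hP.sub_notMem_NS hf (hF.2 _ (by lia))

theorem card_rfSupport_add_card_exchangeSet_add_card_le (hP : IsSymmPF n F P) (hF : F ∉ NS n)
    (f : ℤ) (i : Fin e) :
    #(rfSupport n f i) + #(exchangeSet n P f i) + #{j | i ∈ rfSupport n (F - f) j} ≤ e := by
  have hUV : Disjoint (rfSupport n f i) (exchangeSet n P f i) := by
    refine disjoint_left.2 fun j hU hV ↦ ?_
    exact (hP.mem_PF _ (mem_exchangeSet.1 hV)).1 (mem_rfSupport.1 hU)
  have hUVW : Disjoint (rfSupport n f i ∪ exchangeSet n P f i)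
      (univ.filter fun j ↦ i ∈ rfSupport n (F - f) j) := by
    refine disjoint_left.2 fun j hj hW ↦ ?_
    replace hW : F - f + n j - n i ∈ NS n := mem_rfSupport.1 (mem_filter.1 hW).2
    rcases mem_union.1 hj with hU | hV
    · apply hF
      convert add_mem_NS (mem_rfSupport.1 hU) hW using 1
      ring
    · apply hP.sub_notMem_NS (mem_exchangeSet.1 hV)
      convert hW using 1
      ring
  rw [← card_union_of_disjoint hUV, ← card_union_of_disjoint hUVW]
  exact card_finset_fin_le _

theorem sum_card_mem_rfSupport_sub (hP : IsSymmPF n F P) :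
    ∑ f ∈ P, ∑ i, #{j | i ∈ rfSupport n (F - f) j} = ∑ f ∈ P, ∑ i, #(rfSupport n f i) := by
  calc ∑ f ∈ P, ∑ i, #{j | i ∈ rfSupport n (F - f) j}
      = ∑ f ∈ P, ∑ j, #(rfSupport n (F - f) j) := by
        refine sum_congr rfl fun f _ ↦ ?_
        refine (sum_card_bipartiteAbove_eq_sum_card_bipartiteBelow
          fun i j ↦ i ∈ rfSupport n (F - f) j).trans ?_
        simp only [bipartiteBelow, filter_univ_mem]
    _ = ∑ f ∈ P, ∑ i, #(rfSupport n f i) :=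
        sum_nbij' (F - ·) (F - ·) hP.sub_mem hP.sub_mem (by simp) (by simp) (by simp)

theorem sum_rowWeight_le (hP : IsSymmPF n F P) (hF : F ∉ NS n) :
    ∑ p ∈ P ×ˢ univ, rowWeight n P p.1 p.2 ≤ #P * (e * e) := by
  calc ∑ p ∈ P ×ˢ univ, rowWeight n P p.1 p.2
      = ∑ f ∈ P, ∑ i, (#(rfSupport n f i) + #(exchangeSet n P f i)
          + #{j | i ∈ rfSupport n (F - f) j}) := by
        simp only [rowWeight, sum_product, sum_add_distrib, ← mul_sum,
          hP.sum_card_mem_rfSupport_sub]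
        ring
    _ ≤ ∑ _f ∈ P, ∑ _i : Fin e, e := by
        gcongr with f _ i _
        exact hP.card_rfSupport_add_card_exchangeSet_add_card_le hF f i
    _ = #P * (e * e) := by simp

theorem card_pureRows_le (hP : IsSymmPF n F P) (hf : f ∈ P) (hU : rfSupport n f i = {j}) :
    #(pureRows n P j) ≤ #(exchangeSet n P f i) := by
  have hsum : ∀ p ∈ pureRows n P j, p.1 + n p.2 = f + n i := fun p hp ↦
    add_eq_add_of_rfSupport_eq_singleton (hP.mem_PF _ (mem_pureRows.1 hp).1) (hP.mem_PF f hf)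
      (mem_pureRows.1 hp).2 hU
  refine card_le_card_of_injOn Prod.snd (fun p hp ↦ ?_) fun p hp q hq hpq ↦ ?_
  · rw [mem_coe, mem_exchangeSet, ← hsum p hp, add_sub_cancel_right]
    exact (mem_pureRows.1 hp).1
  · have h := (hsum p hp).trans (hsum q hq).symm
    rw [hpq, add_left_inj] at h
    exact Prod.ext h hpq

theorem five_sub_rowWeight_le (hP : IsSymmPF n F P) (hF : IsFrob n F) (hf : f ∈ P) (i : Fin e) :
    5 - (rowWeight n P f i : ℤ) ≤
      ∑ j, if rfSupport n f i = {j} then 3 - (#(pureRows n P j) : ℤ) else 0 := by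
  have hU : 0 < #(rfSupport n f i) :=
    card_pos.2 (rfSupport_nonempty ((hP.mem_PF f hf).2 i) (hP.add_ne_zero hF hf i))
  have hV : 0 < #(exchangeSet n P f i) := card_pos.2 ⟨i, self_mem_exchangeSet hf⟩
  by_cases h : ∃ j, rfSupport n f i = {j}
  · obtain ⟨j, hj⟩ := h
    have ht := hP.card_pureRows_le hf hj
    simp only [rowWeight, hj, card_singleton, singleton_inj, sum_ite_eq, mem_univ, if_true]
    lia
  · have hU1 : #(rfSupport n f i) ≠ 1 := mt card_eq_one.1 h
    rw [sum_eq_zero fun j _ ↦ if_neg fun hj ↦ h ⟨j, hj⟩, rowWeight]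
    lia

theorem five_mul_le_sum_rowWeight_add (hP : IsSymmPF n F P) (hF : IsFrob n F) :
    5 * (#P * e) ≤ ∑ p ∈ P ×ˢ univ, rowWeight n P p.1 p.2 + 2 * e := by
  have hshortfall : ∑ p ∈ P ×ˢ univ, (5 - (rowWeight n P p.1 p.2 : ℤ)) ≤ 2 * e := by
    calc ∑ p ∈ P ×ˢ univ, (5 - (rowWeight n P p.1 p.2 : ℤ))
        ≤ ∑ p ∈ P ×ˢ univ, ∑ j,
            if rfSupport n p.1 p.2 = {j} then 3 - (#(pureRows n P j) : ℤ) else 0 :=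
          sum_le_sum fun p hp ↦ hP.five_sub_rowWeight_le hF (mem_product.1 hp).1 p.2
      _ = ∑ j, (#(pureRows n P j) : ℤ) * (3 - #(pureRows n P j)) := by
          rw [sum_comm]
          simp only [← sum_filter, sum_const, nsmul_eq_mul, pureRows]
      _ ≤ ∑ _j : Fin e, 2 := sum_le_sum fun j _ ↦ mul_three_sub_le_two _
      _ = 2 * e := by simp [mul_comm]
  simp only [sum_sub_distrib, sum_const, card_product, card_univ, Fintype.card_fin,
    nsmul_eq_mul] at hshortfall
  push_cast at hshortfall
  zify
  linarith

theorem five_sub_mul_card_le (hP : IsSymmPF n F P) (hF : IsFrob n F) :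
    (5 - (e : ℤ)) * #P ≤ 2 := by
  have he : (0 : ℤ) < e := by exact_mod_cast Nat.pos_of_ne_zero hF.neZero.ne
  have h : 5 * (#P * e) ≤ #P * (e * e) + 2 * e :=
    (hP.five_mul_le_sum_rowWeight_add hF).trans
      (Nat.add_le_add_right (hP.sum_rowWeight_le hF.1) _)
  zify at h
  refine le_of_mul_le_mul_left ?_ he
  linarith

end IsSymmPF

theorem AlmostSym.isSymmPF (hAS : AlmostSym n F) (hF : IsFrob n F) :
    IsSymmPF n F (hF.finite_PF.toFinset.erase F) where
  mem_PF f hf := by simpa using (mem_erase.1 hf).2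
  sub_mem f hf := by
    simp only [mem_erase, Set.Finite.mem_toFinset] at hf ⊢
    refine ⟨fun h ↦ hf.2.1 ?_, (hAS f hf.2.1 (hF.sub_notMem_NS hf.2 hf.1)).2⟩
    rw [sub_eq_self.1 h]
    exact zero_mem_NS n

theorem stmt12_general {e : ℕ} (n : Fin e → ℕ) (hpos : ∀ i, 0 < n i)
    (F : ℤ) (hF : IsFrob n F) (hAS : AlmostSym n F) :
    (5 - (e : ℤ)) * ((PF n).ncard - 1) ≤ 2 := by
  have hcard : (#(hF.finite_PF.toFinset.erase F) : ℤ) = (PF n).ncard - 1 := by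
    rw [cast_card_erase_of_mem (hF.finite_PF.mem_toFinset.2 (hF.mem_PF hpos)),
      Set.ncard_eq_toFinset_card _ hF.finite_PF]
  rw [← hcard]
  exact (hAS.isSymmPF hF).five_sub_mul_card_le hF

theorem stmt12 (n : Fin 4 → ℕ)
    (hpos : ∀ i, 0 < n i)
    (hgcd : Finset.univ.gcd n = 1)
    (hmin : MinGen n)
    (F : ℤ) (hF : IsFrob n F) (hAS : AlmostSym n F) :
    (PF n).ncard ≤ 3 := by
  have h := stmt12_general n hpos F hF hAS
  lia
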